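/- Let n be a positive even integer and z ∈ I^FPF_n. For each N ≥ n, let p_N ∈ ℤ[β][x_1,…,x_n] be the polynomial obtained from the symplectic Grothendieck polynomial 𝔊^Sp_{(21)^N × z} ∈ ℤ[β][x_1,…,x_{2N+n}] by substituting x_j = 0 for all j > n. Then p_N = p_{N'} for all N, N' ≥ n, and this common polynomial is symmetric in x_1,…,x_n (invariant under all permutations of these variables). -/

import Mathlib

open MvPolynomial

noncomputable section

/-- The coefficient ring `ℤ[β]`. -/
abbrev Rb : Type := Polynomial ℤ

/-- The indeterminate `β`. -/
def bb : Rb := Polynomial.X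

/-- The order-reversing permutation `n⋯321`, i.e. `i ↦ n+1-i` in 1-indexed notation. -/
def revPerm (n : ℕ) : Equiv.Perm (Fin n) :=
  ⟨Fin.rev, Fin.rev, fun i => Fin.rev_rev i, fun i => Fin.rev_rev i⟩

/-- `z` is a fixed-point-free involution. -/
def IsFPF {n : ℕ} (z : Equiv.Perm (Fin n)) : Prop :=
  z * z = 1 ∧ ∀ i, z i ≠ i

/-- `x_i + x_j + β x_i x_j`. -/
def oplus {n : ℕ} (i j : Fin n) : MvPolynomial (Fin n) Rb :=
  X i + X j + C bb * (X i * X j)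

/-- `IsDivDiffB i j f g` encodes `∂_i^{(β)} f = g` where `j = i+1`:
`∂_i^{(β)} f = ((1+βx_j) f - s_i((1+βx_j) f)) / (x_i - x_j)`, stated multiplicatively
(the quotient is exact, and `g` is uniquely determined since the ring is a domain). -/
def IsDivDiffB {n : ℕ} (i j : Fin n) (f g : MvPolynomial (Fin n) Rb) : Prop :=
  (X i - X j) * g =
    (1 + C bb * X j) * f - rename ⇑(Equiv.swap i j) ((1 + C bb * X j) * f)

/-- `∏_{1 ≤ i < j ≤ n-i} (x_i + x_j + β x_i x_j)` (variables 0-indexed). -/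
def spTop (n : ℕ) : MvPolynomial (Fin n) Rb :=
  ∏ p ∈ Finset.univ.filter
      (fun p : Fin n × Fin n => p.1 < p.2 ∧ (p.1 : ℕ) + (p.2 : ℕ) + 2 ≤ n),
    oplus p.1 p.2

/-- `x_1^{n-1} x_2^{n-2} ⋯ x_{n-1}^1` (variables 0-indexed). -/
def grTop (n : ℕ) : MvPolynomial (Fin n) Rb :=
  ∏ a : Fin n, X a ^ (n - 1 - (a : ℕ))

/-- The defining property of the family of symplectic Grothendieck polynomials. -/
def IsSpFam (n : ℕ) (G : Equiv.Perm (Fin n) → MvPolynomial (Fin n) Rb) : Prop :=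
  G (revPerm n) = spTop n ∧
    ∀ z : Equiv.Perm (Fin n), IsFPF z →
      ∀ i j : Fin n, (j : ℕ) = (i : ℕ) + 1 →
        z i ≠ j → z j ≠ i → z j < z i →
          IsDivDiffB i j (G z) (G (Equiv.swap i j * z * Equiv.swap i j))

/-- The defining property of the family of Grothendieck polynomials. -/
def IsGrothFam (n : ℕ) (G : Equiv.Perm (Fin n) → MvPolynomial (Fin n) Rb) : Prop :=
  G (revPerm n) = grTop n ∧
    ∀ (w : Equiv.Perm (Fin n)) (i j : Fin n), (j : ℕ) = (i : ℕ) + 1 →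
      w j < w i → IsDivDiffB i j (G w) (G (w * Equiv.swap i j))

/-- The length (number of inversions) of a permutation. -/
def invLen {n : ℕ} (w : Equiv.Perm (Fin n)) : ℕ :=
  (Finset.univ.filter (fun p : Fin n × Fin n => p.1 < p.2 ∧ w p.2 < w p.1)).card

/-- The fixed-point-free involution length `ℓ_fpf(z) = #{(i,j) : z(i) > z(j) < i < j}`. -/
def fpfLen {n : ℕ} (z : Equiv.Perm (Fin n)) : ℕ :=
  (Finset.univ.filter
      (fun p : Fin n × Fin n => z p.2 < z p.1 ∧ z p.2 < p.1 ∧ p.1 < p.2)).card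

/-- The underlying function of `Θ = (1,2)(3,4)⋯(n-1,n)`. -/
def thetaFun (n : ℕ) (hn : n % 2 = 0) (i : Fin n) : Fin n :=
  ⟨if (i : ℕ) % 2 = 0 then (i : ℕ) + 1 else (i : ℕ) - 1, by
    have hi := i.isLt
    split_ifs with h <;> omega⟩

/-- The fixed-point-free involution `Θ = (1,2)(3,4)⋯(n-1,n)`. -/
def theta (n : ℕ) (hn : n % 2 = 0) : Equiv.Perm (Fin n) :=
  Function.Involutive.toPerm (thetaFun n hn) (by
    intro i
    have hi := i.isLt
    apply Fin.ext
    simp only [thetaFun]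
    split_ifs <;> omega)

/-- One step of the partial Hecke action: `heckeStep a z = some (z · s_{a+1})` when defined,
with `a` a 0-indexed letter (so `a` corresponds to the simple transposition of `a+1, a+2`
in 1-indexed notation). -/
def heckeStep {n : ℕ} (a : ℕ) (z : Equiv.Perm (Fin n)) : Option (Equiv.Perm (Fin n)) :=
  if h : a + 1 < n then
    let i : Fin n := ⟨a, Nat.lt_of_succ_lt h⟩
    let j : Fin n := ⟨a + 1, h⟩
    if z i < z j then some (Equiv.swap i j * z * Equiv.swap i j)
    else if z i = j ∧ z j = i then none
    else if z i ≠ j ∧ z j ≠ i ∧ z j < z i then some z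
    else none
  else none

/-- Apply a word of (0-indexed) letters to `z` via the partial Hecke action. -/
def heckeApply {n : ℕ} (l : List ℕ) (z : Equiv.Perm (Fin n)) :
    Option (Equiv.Perm (Fin n)) :=
  l.foldl (fun o a => o.bind (heckeStep a)) (some z)

/-- The simple transposition corresponding to the 0-indexed letter `a`. -/
def swapAt (n : ℕ) (a : ℕ) : Equiv.Perm (Fin n) :=
  if h : a + 1 < n then Equiv.swap ⟨a, Nat.lt_of_succ_lt h⟩ ⟨a + 1, h⟩ else 1

/-- The permutation `s_{i_1} s_{i_2} ⋯ s_{i_l}` of a word. -/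
def wordToPerm (n : ℕ) (l : List ℕ) : Equiv.Perm (Fin n) := (l.map (swapAt n)).prod

/-- `l` is a reduced word for `w`. -/
def IsReducedWord (n : ℕ) (w : Equiv.Perm (Fin n)) (l : List ℕ) : Prop :=
  (∀ a ∈ l, a + 1 < n) ∧ wordToPerm n l = w ∧ l.length = invLen w

/-- The set of Hecke atoms `B_fpf(z)`. -/
def Bfpf (n : ℕ) (hn : n % 2 = 0) (z : Equiv.Perm (Fin n)) :
    Finset (Equiv.Perm (Fin n)) :=
  @Finset.filter _
    (fun w => ∃ l : List ℕ, IsReducedWord n w l ∧ heckeApply l (theta n hn) = some z)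
    (Classical.decPred _) Finset.univ

/-- `extPerm z w` is the permutation `z × w` acting on the first `m` letters by `z`
and the last `n` letters by `w`. -/
def extPerm {m n : ℕ} (z : Equiv.Perm (Fin m)) (w : Equiv.Perm (Fin n)) :
    Equiv.Perm (Fin (m + n)) :=
  finSumFinEquiv.symm.trans ((Equiv.sumCongr z w).trans finSumFinEquiv)

/-- `rank(z_{[i][j]}) = #{k ∈ [j] : z(k) ≤ i}` (1-indexed sizes `i, j`). -/
def permRank {n : ℕ} (z : Equiv.Perm (Fin n)) (i j : ℕ) : ℕ :=
  (Finset.univ.filter (fun k : Fin n => (k : ℕ) < j ∧ ((z k : Fin n) : ℕ) < i)).card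

/-- The rank of the upper-left `i × j` corner of `A` (1-indexed sizes `i, j ≤ n`). -/
def cornerRank {n : ℕ} (A : Matrix (Fin n) (Fin n) ℂ) (i j : ℕ) : ℕ :=
  Matrix.rank (Matrix.of fun (a : Fin (min i n)) (b : Fin (min j n)) =>
    A ⟨(a : ℕ), lt_of_lt_of_le a.isLt (min_le_right i n)⟩
      ⟨(b : ℕ), lt_of_lt_of_le b.isLt (min_le_right j n)⟩)

/-- The orthogonal Rothe diagram `D^O(z) = {(i, z(j)) : z(i) > z(j) ≤ i < j}` (0-indexed). -/
def DO (n : ℕ) (z : Equiv.Perm (Fin n)) : Finset (Fin n × Fin n) :=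
  Finset.image (fun p : Fin n × Fin n => (p.1, z p.2))
    (Finset.univ.filter (fun p : Fin n × Fin n => z p.2 < z p.1 ∧ z p.2 ≤ p.1 ∧ p.1 < p.2))

/-- The symplectic Rothe diagram `D^Sp(z) = {(i, z(j)) : z(i) > z(j) < i < j}` (0-indexed). -/
def DSp (n : ℕ) (z : Equiv.Perm (Fin n)) : Finset (Fin n × Fin n) :=
  Finset.image (fun p : Fin n × Fin n => (p.1, z p.2))
    (Finset.univ.filter (fun p : Fin n × Fin n => z p.2 < z p.1 ∧ z p.2 < p.1 ∧ p.1 < p.2))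

/-- The essential set `Ess(D) = {(i,j) ∈ D : (i,j+1) ∉ D and (i+1,j) ∉ D}`. -/
def Ess {n : ℕ} (D : Finset (Fin n × Fin n)) : Finset (Fin n × Fin n) :=
  D.filter (fun p =>
    (∀ q ∈ D, ¬(q.1 = p.1 ∧ (q.2 : ℕ) = (p.2 : ℕ) + 1)) ∧
    (∀ q ∈ D, ¬((q.1 : ℕ) = (p.1 : ℕ) + 1 ∧ q.2 = p.2)))

/-- A permutation is vexillary if it avoids the pattern 2143. -/
def Vexillary {n : ℕ} (z : Equiv.Perm (Fin n)) : Prop :=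
  ¬ ∃ i j k l : Fin n, i < j ∧ j < k ∧ k < l ∧ z j < z i ∧ z i < z l ∧ z l < z k

/-- The ideal of `ℤ[x_1,…,x_N]` generated by symmetric polynomials with zero constant term. -/
def ILambda (N : ℕ) : Ideal (MvPolynomial (Fin N) ℤ) :=
  Ideal.span {f : MvPolynomial (Fin N) ℤ |
    (∀ σ : Equiv.Perm (Fin N), rename (⇑σ) f = f) ∧ coeff 0 f = 0}

/-- Substitute `x_j = 0` for all `j > n`, producing a polynomial in `x_1,…,x_n`. -/
def truncVars (n N : ℕ) (f : MvPolynomial (Fin N) Rb) : MvPolynomial (Fin n) Rb :=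
  aeval (fun i : Fin N => if h : (i : ℕ) < n then X ⟨(i : ℕ), h⟩ else 0) f

/-- The order used to list the elements of a pipe-dream subset `S`:
rows weakly increasing, columns strictly decreasing within a row. -/
def rowOrder {n : ℕ} (p q : Fin n × Fin n) : Prop :=
  p.1 < q.1 ∨ (p.1 = q.1 ∧ q.2 < p.2)

/-- `δ(S)` is a symplectic Hecke word for `z` (with Hecke words computed from `Θ`);
here `L` is the listing of `S` in the order `rowOrder`, and `(a,b) ∈ S` (0-indexed)
contributes the 0-indexed letter `a + b`, i.e. the 1-indexed letter `(b+1)+(a+1)-1`. -/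
def DeltaHeckeWord (n : ℕ) (hn : n % 2 = 0) (z : Equiv.Perm (Fin n))
    (S : Finset (Fin n × Fin n)) : Prop :=
  ∃ L : List (Fin n × Fin n), L.toFinset = S ∧ L.Chain' rowOrder ∧
    heckeApply (L.map (fun p => (p.1 : ℕ) + (p.2 : ℕ))) (theta n hn) = some z


/-! ### Basic operator lemmas -/

lemma X_sub_ne {n : ℕ} {i j : Fin n} (h : i ≠ j) :
    (X i - X j : MvPolynomial (Fin n) Rb) ≠ 0 := by
  intro h0
  exact h (MvPolynomial.X_injective (sub_eq_zero.mp h0))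

lemma rename_rename_perm {n : ℕ} (s t : Equiv.Perm (Fin n)) (f : MvPolynomial (Fin n) Rb) :
    rename ⇑s (rename ⇑t f) = rename ⇑(s * t) f := by
  rw [rename_rename]; rfl

lemma divdiff_unique {n : ℕ} {i j : Fin n} (hij : i ≠ j) {f g g' : MvPolynomial (Fin n) Rb}
    (h : IsDivDiffB i j f g) (h' : IsDivDiffB i j f g') : g = g' := by
  apply mul_left_cancel₀ (X_sub_ne hij)
  rw [h, h']

lemma divdiff_symm {n : ℕ} {i j : Fin n} (hij : i ≠ j) {f g : MvPolynomial (Fin n) Rb}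
    (h : IsDivDiffB i j f g) : rename ⇑(Equiv.swap i j) g = g := by
  apply mul_left_cancel₀ (X_sub_ne hij)
  unfold IsDivDiffB at h
  have h2 := congrArg (rename ⇑(Equiv.swap i j)) h
  simp only [map_mul, map_sub, rename_X, rename_rename_perm, map_add, map_one,
    rename_C, Equiv.swap_apply_left, Equiv.swap_apply_right, Equiv.swap_mul_self,
    Equiv.Perm.coe_one, rename_id, AlgHom.id_apply] at h h2
  linear_combination -h2 - h

lemma divdiff_commute {n : ℕ} {i j a b : Fin n} (hij : i ≠ j)
    (hai : a ≠ i) (haj : a ≠ j) (hbi : b ≠ i) (hbj : b ≠ j)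
    {f g : MvPolynomial (Fin n) Rb}
    (h : IsDivDiffB i j f g) (hf : rename ⇑(Equiv.swap a b) f = f) :
    rename ⇑(Equiv.swap a b) g = g := by
  apply mul_left_cancel₀ (X_sub_ne hij)
  unfold IsDivDiffB at h
  have h2 := congrArg (rename ⇑(Equiv.swap a b)) h
  have hc : Equiv.swap a b * Equiv.swap i j = Equiv.swap i j * Equiv.swap a b := by
    rw [Equiv.mul_swap_eq_swap_mul, Equiv.swap_apply_of_ne_of_ne hai.symm hbi.symm,
      Equiv.swap_apply_of_ne_of_ne haj.symm hbj.symm]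
  have hff : rename ⇑(Equiv.swap a b) (rename ⇑(Equiv.swap i j) f)
      = rename ⇑(Equiv.swap i j) f := by
    rw [rename_rename_perm, hc, ← rename_rename_perm, hf]
  simp only [map_mul, map_sub, rename_X, map_add, map_one, hff, hf,
    rename_C, Equiv.swap_apply_left, Equiv.swap_apply_right,
    Equiv.swap_apply_of_ne_of_ne hai.symm hbi.symm,
    Equiv.swap_apply_of_ne_of_ne haj.symm hbj.symm] at h h2
  linear_combination h2 - h

lemma swap_braid {n : ℕ} {i j k : Fin n} (hij : i ≠ j) (hjk : j ≠ k) (hik : i ≠ k) :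
    Equiv.swap i j * Equiv.swap j k * Equiv.swap i j =
      Equiv.swap j k * Equiv.swap i j * Equiv.swap j k := by
  ext a
  simp only [Equiv.Perm.mul_apply, Equiv.swap_apply_def]
  split_ifs <;> simp_all

lemma braid_symm1 {n : ℕ} {i j k : Fin n} (hij : i ≠ j) (hjk : j ≠ k) (hik : i ≠ k)
    {f g h : MvPolynomial (Fin n) Rb} (h1 : IsDivDiffB i j f g) (h2 : IsDivDiffB j k g h)
    (hf : rename ⇑(Equiv.swap j k) f = f) : rename ⇑(Equiv.swap i j) h = h := by
  have hb : rename ⇑(Equiv.swap i j) (rename ⇑(Equiv.swap j k) (rename ⇑(Equiv.swap i j) f))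
      = rename ⇑(Equiv.swap j k) (rename ⇑(Equiv.swap i j) f) := by
    conv_rhs => rw [← hf]
    simp only [rename_rename_perm, ← mul_assoc, swap_braid hij hjk hik]
  have hss : ∀ p : MvPolynomial (Fin n) Rb,
      rename ⇑(Equiv.swap i j) (rename ⇑(Equiv.swap i j) p) = p := by
    intro p; rw [rename_rename_perm, Equiv.swap_mul_self]; simp
  unfold IsDivDiffB at h1 h2
  have h3 := congrArg (rename ⇑(Equiv.swap j k)) h1
  simp only [map_mul, map_sub, rename_X, map_add, map_one, hf,
    rename_C, Equiv.swap_apply_left, Equiv.swap_apply_right,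
    Equiv.swap_apply_of_ne_of_ne hij hik] at h1 h2 h3
  generalize rename ⇑(Equiv.swap j k) g = g2 at *
  have E : (X i - X j) * (X i - X k) * (X j - X k) * h =
      (X j - X k) * (1 + C bb * X j) * (1 + C bb * X k) * f
      - (X i - X k) * (1 + C bb * X i) * (1 + C bb * X k) * rename ⇑(Equiv.swap i j) f
      + (X i - X j) * (1 + C bb * X i) * (1 + C bb * X j) *
        rename ⇑(Equiv.swap j k) (rename ⇑(Equiv.swap i j) f) := by
    linear_combination (X i - X j) * (X i - X k) * h2 + (X i - X k) * (1 + C bb * X k) * h1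
      - (X i - X j) * (1 + C bb * X j) * h3
  have E' := congrArg (rename ⇑(Equiv.swap i j)) E
  simp only [map_mul, map_sub, rename_X, map_add, map_one, hb, hss,
    rename_C, Equiv.swap_apply_left, Equiv.swap_apply_right,
    Equiv.swap_apply_of_ne_of_ne hik.symm hjk.symm] at E'
  apply mul_left_cancel₀ (mul_ne_zero (mul_ne_zero (X_sub_ne hij) (X_sub_ne hik)) (X_sub_ne hjk))
  linear_combination -E' - E

lemma braid_symm2 {n : ℕ} {i j k : Fin n} (hij : i ≠ j) (hjk : j ≠ k) (hik : i ≠ k)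
    {f g h : MvPolynomial (Fin n) Rb} (h1 : IsDivDiffB j k f g) (h2 : IsDivDiffB i j g h)
    (hf : rename ⇑(Equiv.swap i j) f = f) : rename ⇑(Equiv.swap j k) h = h := by
  have hb : rename ⇑(Equiv.swap j k) (rename ⇑(Equiv.swap i j) (rename ⇑(Equiv.swap j k) f))
      = rename ⇑(Equiv.swap i j) (rename ⇑(Equiv.swap j k) f) := by
    conv_rhs => rw [← hf]
    simp only [rename_rename_perm, ← mul_assoc, swap_braid hij hjk hik]
  have hss : ∀ p : MvPolynomial (Fin n) Rb,
      rename ⇑(Equiv.swap j k) (rename ⇑(Equiv.swap j k) p) = p := by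
    intro p; rw [rename_rename_perm, Equiv.swap_mul_self]; simp
  unfold IsDivDiffB at h1 h2
  have h3 := congrArg (rename ⇑(Equiv.swap i j)) h1
  simp only [map_mul, map_sub, rename_X, map_add, map_one, hf,
    rename_C, Equiv.swap_apply_left, Equiv.swap_apply_right,
    Equiv.swap_apply_of_ne_of_ne hik.symm hjk.symm] at h1 h2 h3
  generalize rename ⇑(Equiv.swap i j) g = g2 at *
  have E : (X i - X j) * (X i - X k) * (X j - X k) * h =
      ((X i - X k) * (1 + C bb * X j) * (1 + C bb * X k)
      - (X j - X k) * (1 + C bb * X i) * (1 + C bb * X k)) * f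
      - (X i - X k) * (1 + C bb * X j) * (1 + C bb * X j) * rename ⇑(Equiv.swap j k) f
      + (X j - X k) * (1 + C bb * X i) * (1 + C bb * X i) *
        rename ⇑(Equiv.swap i j) (rename ⇑(Equiv.swap j k) f) := by
    linear_combination (X i - X k) * (X j - X k) * h2 + (X i - X k) * (1 + C bb * X j) * h1
      - (X j - X k) * (1 + C bb * X i) * h3
  have E' := congrArg (rename ⇑(Equiv.swap j k)) E
  simp only [map_mul, map_sub, rename_X, map_add, map_one, hb, hss, map_zero,
    rename_C, Equiv.swap_apply_left, Equiv.swap_apply_right,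
    Equiv.swap_apply_of_ne_of_ne hij hik] at E'
  apply mul_left_cancel₀ (mul_ne_zero (mul_ne_zero (X_sub_ne hij) (X_sub_ne hik)) (X_sub_ne hjk))
  linear_combination -E' - E

/-! ### Combinatorics of fixed-point-free involutions -/

lemma IsFPF.invol {n : ℕ} {z : Equiv.Perm (Fin n)} (hz : IsFPF z) (a : Fin n) :
    z (z a) = a := by
  have := congrArg (fun w : Equiv.Perm (Fin n) => w a) hz.1
  simpa using this

lemma IsFPF.conj {n : ℕ} {z : Equiv.Perm (Fin n)} (hz : IsFPF z) (i j : Fin n) :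
    IsFPF (Equiv.swap i j * z * Equiv.swap i j) := by
  refine ⟨?_, ?_⟩
  · ext a
    simp [Equiv.Perm.mul_apply, hz.invol]
  · intro a h
    apply hz.2 (Equiv.swap i j a)
    simp only [Equiv.Perm.mul_apply] at h
    have := congrArg (Equiv.swap i j) h
    simpa using this

lemma revPerm_val {n : ℕ} (a : Fin n) : ((revPerm n a : Fin n) : ℕ) = n - 1 - a := by
  simp only [revPerm, Equiv.coe_fn_mk, Fin.val_rev]
  omega

lemma revPerm_fpf {n : ℕ} (hn : n % 2 = 0) : IsFPF (revPerm n) := by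
  refine ⟨?_, ?_⟩
  · ext a
    simp only [Equiv.Perm.mul_apply, revPerm_val, Equiv.Perm.coe_one, id]
    omega
  · intro a h
    have := congrArg Fin.val h
    rw [revPerm_val] at this
    omega

/-- A statistic which strictly decreases towards the reverse permutation. -/
def meas {n : ℕ} (z : Equiv.Perm (Fin n)) : ℕ := ∑ a : Fin n, (a : ℕ) * ((z a : Fin n) : ℕ)

lemma swap_val {n : ℕ} {i j : Fin n} (hij : (j : ℕ) = (i : ℕ) + 1) (a : Fin n) :
    ((Equiv.swap i j a : Fin n) : ℤ) =
      (a : ℤ) + ((if a = i then 1 else 0) - (if a = j then 1 else 0)) := by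
  have hne : i ≠ j := by intro h; rw [h] at hij; omega
  rw [Equiv.swap_apply_def]
  split_ifs with h1 h2 h3
  · exact absurd (h1.symm.trans h2) hne
  · rw [hij, h1]; push_cast; ring
  · rw [h3, hij]; push_cast; ring
  · ring

lemma meas_conj {n : ℕ} {z : Equiv.Perm (Fin n)} (hz : IsFPF z) {i j : Fin n}
    (hij : (j : ℕ) = (i : ℕ) + 1) (hlt : z i < z j) :
    meas (Equiv.swap i j * z * Equiv.swap i j) < meas z := by
  have hne : i ≠ j := by intro h; rw [h] at hij; omega
  have hzij : z i ≠ j := by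
    intro h
    have h2 : z j = i := by rw [← h, hz.invol]
    rw [h, h2, Fin.lt_def] at hlt
    omega
  have hzji : z j ≠ i := by
    intro h
    exact hzij (by rw [← h, hz.invol])
  zify [meas]
  have e1 : ∑ a : Fin n, ((a : ℕ) : ℤ) *
      ((((Equiv.swap i j * z * Equiv.swap i j) a : Fin n) : ℕ) : ℤ) =
      ∑ a : Fin n, (((Equiv.swap i j a : Fin n) : ℕ) : ℤ) *
        (((Equiv.swap i j (z a) : Fin n) : ℕ) : ℤ) := by
    rw [← Equiv.sum_comp (Equiv.swap i j)]
    simp [Equiv.Perm.mul_apply]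
  refine lt_of_eq_of_lt e1 ?_
  simp only [swap_val hij]
  have e2 : ∑ a : Fin n, ((a : ℕ) : ℤ) * ((if z a = i then 1 else 0) - (if z a = j then 1 else 0))
      = (z i : ℤ) - (z j : ℤ) := by
    rw [← Equiv.sum_comp z]
    simp [hz.invol, mul_sub, Finset.sum_sub_distrib]
  have e3 : ∑ a : Fin n, ((if a = i then (1:ℤ) else 0) - (if a = j then 1 else 0)) * ((z a : ℕ) : ℤ)
      = (z i : ℤ) - (z j : ℤ) := by
    simp [sub_mul, Finset.sum_sub_distrib]
  have e4 : ∑ a : Fin n, ((if a = i then (1:ℤ) else 0) - (if a = j then 1 else 0)) *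
      ((if z a = i then 1 else 0) - (if z a = j then 1 else 0)) = 0 := by
    apply Finset.sum_eq_zero
    intro a _
    by_cases h1 : a = i
    · subst h1
      simp [hz.2 a, hzij]
    · by_cases h2 : a = j
      · subst h2
        simp [hz.2 a, hzji]
      · simp [h1, h2]
  have : ∀ a : Fin n, ((a : ℤ) + ((if a = i then (1:ℤ) else 0) - (if a = j then 1 else 0))) *
      ((z a : ℤ) + ((if z a = i then 1 else 0) - (if z a = j then 1 else 0))) =
      (a : ℤ) * (z a : ℤ) +
      ((a : ℕ) : ℤ) * ((if z a = i then 1 else 0) - (if z a = j then 1 else 0)) +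
      ((if a = i then (1:ℤ) else 0) - (if a = j then 1 else 0)) * ((z a : ℕ) : ℤ) +
      ((if a = i then (1:ℤ) else 0) - (if a = j then 1 else 0)) *
      ((if z a = i then 1 else 0) - (if z a = j then 1 else 0)) := by
    intro a; ring
  rw [Finset.sum_congr rfl (fun a _ => this a)]
  simp only [Finset.sum_add_distrib]
  rw [e2, e3, e4]
  have : ((z i : ℕ) : ℤ) < ((z j : ℕ) : ℤ) := by exact_mod_cast hlt
  linarith

lemma exists_ascent {n : ℕ} {z : Equiv.Perm (Fin n)} (h : z ≠ revPerm n) :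
    ∃ i j : Fin n, (j : ℕ) = (i : ℕ) + 1 ∧ z i < z j := by
  by_contra hc
  push Not at hc
  apply h
  obtain _ | n := n
  · ext a; exact a.elim0
  have hanti : StrictAnti z := by
    rw [Fin.strictAnti_iff_succ_lt]
    intro i
    refine lt_of_le_of_ne (hc i.castSucc i.succ (by simp)) ?_
    intro h
    have := congrArg Fin.val (z.injective h)
    simp at this
  have hrev : StrictAnti (revPerm (n+1)) := by
    intro a b hab
    rw [Fin.lt_def, revPerm_val, revPerm_val]
    rw [Fin.lt_def] at hab
    omega
  have := (hanti.range_inj hrev).mp (by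
    rw [z.surjective.range_eq, (revPerm (n+1)).surjective.range_eq])
  exact Equiv.coe_fn_injective this

/-- The data of a usable ascent. -/
lemma ascent_step {n : ℕ} {z : Equiv.Perm (Fin n)} (hz : IsFPF z) {i j : Fin n}
    (hij : (j : ℕ) = (i : ℕ) + 1) (hlt : z i < z j)
    {G : Equiv.Perm (Fin n) → MvPolynomial (Fin n) Rb} (hG : IsSpFam n G) :
    IsDivDiffB i j (G (Equiv.swap i j * z * Equiv.swap i j)) (G z) := by
  have hne : i ≠ j := by intro h; rw [h] at hij; omega
  have hzij : z i ≠ j := by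
    intro h
    have h2 : z j = i := by rw [← h, hz.invol]
    rw [h, h2, Fin.lt_def] at hlt
    omega
  have hzji : z j ≠ i := by
    intro h
    exact hzij (by rw [← h, hz.invol])
  have h1 : (Equiv.swap i j * z * Equiv.swap i j) i = z j := by
    simp [Equiv.Perm.mul_apply, Equiv.swap_apply_of_ne_of_ne hzji (hz.2 j)]
  have h2 : (Equiv.swap i j * z * Equiv.swap i j) j = z i := by
    simp [Equiv.Perm.mul_apply, Equiv.swap_apply_of_ne_of_ne (hz.2 i) hzij]
  have := hG.2 _ (hz.conj i j) i j hij (by rw [h1]; exact hz.2 j) (by rw [h2]; exact hz.2 i)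
    (by rw [h1, h2]; exact hlt)
  have e : Equiv.swap i j * (Equiv.swap i j * z * Equiv.swap i j) * Equiv.swap i j = z := by
    ext a; simp [Equiv.Perm.mul_apply]
  rwa [e] at this

lemma fam_unique {n : ℕ} {G G' : Equiv.Perm (Fin n) → MvPolynomial (Fin n) Rb}
    (hG : IsSpFam n G) (hG' : IsSpFam n G') (k : ℕ) :
    ∀ z : Equiv.Perm (Fin n), IsFPF z → meas z = k → G z = G' z := by
  induction k using Nat.strong_induction_on with
  | _ k ih =>
    intro z hz hk
    by_cases hr : z = revPerm n
    · rw [hr, hG.1, hG'.1]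
    · obtain ⟨i, j, hij, hlt⟩ := exists_ascent hr
      have hne : i ≠ j := by intro h; rw [h] at hij; omega
      have h1 := ascent_step hz hij hlt hG
      have h2 := ascent_step hz hij hlt hG'
      rw [ih _ (hk ▸ meas_conj hz hij hlt) _ (hz.conj i j) rfl] at h1
      exact divdiff_unique hne h1 h2

lemma spTop_symm {n : ℕ} {i j : Fin n} (hij : (j : ℕ) = (i : ℕ) + 1)
    (hr : (i : ℕ) + (j : ℕ) + 1 = n) : rename ⇑(Equiv.swap i j) (spTop n) = spTop n := by
  unfold spTop
  rw [map_prod]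
  refine Finset.prod_equiv (Equiv.prodCongr (Equiv.swap i j) (Equiv.swap i j)) ?_ ?_
  · rintro ⟨a, b⟩
    simp only [Finset.mem_filter, Finset.mem_univ, true_and, Equiv.prodCongr_apply, Prod.map,
      Equiv.swap_apply_def, Fin.lt_def, Fin.ext_iff]
    split_ifs <;> omega
  · rintro ⟨a, b⟩ _
    simp [oplus]

lemma fam_symm {n : ℕ} {G : Equiv.Perm (Fin n) → MvPolynomial (Fin n) Rb}
    (hG : IsSpFam n G) (k : ℕ) :
    ∀ z : Equiv.Perm (Fin n), IsFPF z → meas z = k → ∀ i j : Fin n, (j : ℕ) = (i : ℕ) + 1 →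
      z i = j → rename ⇑(Equiv.swap i j) (G z) = G z := by
  induction k using Nat.strong_induction_on with
  | _ k ih =>
    intro z hz hk i j hij hzi
    have hne : i ≠ j := by intro h; rw [h] at hij; omega
    have hzj : z j = i := by rw [← hzi, hz.invol]
    by_cases hr : z = revPerm n
    · rw [hr, hG.1]
      apply spTop_symm hij
      have := revPerm_val i
      rw [← hr, hzi] at this
      omega
    · obtain ⟨a, b, hab, hlt⟩ := exists_ascent hr
      have hneab : a ≠ b := by intro h; rw [h] at hab; omega
      have h1 := ascent_step hz hab hlt hG
      have hm1 := meas_conj hz hab hlt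
      have hw := hz.conj a b
      by_cases hai : a = i
      · subst hai
        have : b = j := by apply Fin.ext; omega
        subst this
        rw [hzi, hzj, Fin.lt_def] at hlt
        omega
      by_cases haj : a = j
      · -- ascent directly to the right
        subst haj
        have hib : i ≠ b := by intro h; subst h; omega
        have hzb1 : z b ≠ i := by
          intro h; apply hneab; apply z.injective; rw [h, hzj]
        have hzb2 : z b ≠ a := by
          intro h; apply hib; apply z.injective; rw [h, hzi]
        have hzb3 := hz.2 b
        set w := Equiv.swap a b * z * Equiv.swap a b with hwdef
        have wi : w i = b := by
          simp [hwdef, Equiv.Perm.mul_apply, Equiv.swap_apply_of_ne_of_ne hne hib, hzi]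
        have wa : w a = z b := by
          simp [hwdef, Equiv.Perm.mul_apply, Equiv.swap_apply_of_ne_of_ne hzb2 hzb3]
        have hlt2 : w i < w a := by
          rw [wi, wa]
          rw [hzj] at hlt
          rw [Fin.lt_def] at hlt ⊢
          have e1 : (z b : ℕ) ≠ i := fun h => hzb1 (Fin.ext h)
          have e2 : (z b : ℕ) ≠ a := fun h => hzb2 (Fin.ext h)
          have e3 : (z b : ℕ) ≠ b := fun h => hzb3 (Fin.ext h)
          omega
        have h2 := ascent_step hw hij hlt2 hG
        have hm2 := meas_conj hw hij hlt2
        have h3 := ih _ (by omega) _ (hw.conj i a) rfl a b hab (by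
          have wb : w b = i := by rw [← wi, hw.invol]
          simp [Equiv.Perm.mul_apply, wi, Equiv.swap_apply_of_ne_of_ne hib.symm hneab.symm])
        exact braid_symm1 hne hneab hib h2 h1 h3
      by_cases hbi : b = i
      · -- ascent directly to the left
        subst hbi
        have haj : a ≠ j := haj
        have hza1 : z a ≠ b := by
          intro h; apply haj; apply z.injective; rw [h, hzj]
        have hza2 : z a ≠ j := by
          intro h; apply hneab; apply z.injective; rw [h, hzi]
        have hza3 := hz.2 a
        set w := Equiv.swap a b * z * Equiv.swap a b with hwdef
        have wj : w j = a := by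
          simp [hwdef, Equiv.Perm.mul_apply, Equiv.swap_apply_of_ne_of_ne haj.symm hne.symm, hzj]
        have wb : w b = z a := by
          simp [hwdef, Equiv.Perm.mul_apply, Equiv.swap_apply_of_ne_of_ne hza3 hza1]
        have hlt2 : w b < w j := by
          rw [wj, wb]
          rw [hzi] at hlt
          rw [Fin.lt_def] at hlt ⊢
          have e1 : (z a : ℕ) ≠ b := fun h => hza1 (Fin.ext h)
          have e3 : (z a : ℕ) ≠ a := fun h => hza3 (Fin.ext h)
          omega
        have h2 := ascent_step hw hij hlt2 hG
        have hm2 := meas_conj hw hij hlt2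
        have h3 := ih _ (by omega) _ (hw.conj b j) rfl a b hab (by
          have wa : w a = j := by rw [← wj, hw.invol]
          simp [Equiv.Perm.mul_apply, wa, Equiv.swap_apply_of_ne_of_ne hneab haj])
        exact braid_symm2 hneab hne haj h2 h1 h3
      have hbj : b ≠ j := by
        intro h
        apply hai
        apply Fin.ext
        rw [h] at hab
        omega
      have h3 := ih _ (by omega) _ hw rfl i j hij (by
        simp [Equiv.Perm.mul_apply, hzi,
          Equiv.swap_apply_of_ne_of_ne (Ne.symm hai) (Ne.symm hbi),
          Equiv.swap_apply_of_ne_of_ne (Ne.symm haj) (Ne.symm hbj)])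
      exact divdiff_commute hneab (Ne.symm hai) (Ne.symm hbi) (Ne.symm haj) (Ne.symm hbj) h1 h3

/-! ### Killing the first two variables -/

/-- The variable `t` when it exists, else `0`. -/
def yv (m t : ℕ) : MvPolynomial (Fin m) Rb := if h : t < m then X ⟨t, h⟩ else 0

/-- Kill the variables `0` and `k`, and renumber the others. -/
def phi (m k : ℕ) : MvPolynomial (Fin (2 + m)) Rb →ₐ[Rb] MvPolynomial (Fin m) Rb :=
  aeval (fun a : Fin (2 + m) =>
    if (a : ℕ) = 0 ∨ (a : ℕ) = k then 0
    else if (a : ℕ) < k then yv m ((a : ℕ) - 1) else yv m ((a : ℕ) - 2))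

/-- Kill the variables `0` and `k`. -/
def tau (m k : ℕ) : MvPolynomial (Fin (2 + m)) Rb →ₐ[Rb] MvPolynomial (Fin (2 + m)) Rb :=
  aeval (fun a : Fin (2 + m) => if (a : ℕ) = 0 ∨ (a : ℕ) = k then 0 else X a)

lemma phi_X (m k : ℕ) (a : Fin (2 + m)) : phi m k (X a) =
    if (a : ℕ) = 0 ∨ (a : ℕ) = k then 0
    else if (a : ℕ) < k then yv m ((a : ℕ) - 1) else yv m ((a : ℕ) - 2) := by
  simp [phi]

lemma tau_X (m k : ℕ) (a : Fin (2 + m)) : tau m k (X a) =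
    if (a : ℕ) = 0 ∨ (a : ℕ) = k then 0 else X a := by
  simp [tau]

lemma algHom_C' {n m : ℕ} (φ : MvPolynomial (Fin n) Rb →ₐ[Rb] MvPolynomial (Fin m) Rb) (r : Rb) :
    φ (C r) = C r := by
  have := φ.commutes r
  simpa [MvPolynomial.algebraMap_eq] using this

lemma phi_tau (m k : ℕ) (f : MvPolynomial (Fin (2 + m)) Rb) :
    phi m k (tau m k f) = phi m k f := by
  have : (phi m k).comp (tau m k) = phi m k := by
    apply MvPolynomial.algHom_ext
    intro a
    simp only [AlgHom.comp_apply, tau_X]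
    split_ifs with h
    · rw [map_zero, phi_X, if_pos h]
    · rfl
  exact DFunLike.congr_fun this f

lemma phi_swap (m k : ℕ) (hk : 1 ≤ k) {i j : Fin (2 + m)} (hi : (i : ℕ) = k)
    (hj : (j : ℕ) = k + 1) (f : MvPolynomial (Fin (2 + m)) Rb) :
    phi m k (rename ⇑(Equiv.swap i j) f) = phi m (k + 1) f := by
  have : (phi m k).comp (rename ⇑(Equiv.swap i j)) = phi m (k + 1) := by
    apply MvPolynomial.algHom_ext
    intro a
    simp only [AlgHom.comp_apply, rename_X, phi_X, Equiv.swap_apply_def, Fin.ext_iff]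
    by_cases h1 : (a : ℕ) = i
    · have e1 : ¬ ((j : ℕ) = 0 ∨ (j : ℕ) = k) := by omega
      have e2 : ¬ (j : ℕ) < k := by omega
      have e3 : ¬ ((a : ℕ) = 0 ∨ (a : ℕ) = k + 1) := by omega
      have e4 : (a : ℕ) < k + 1 := by omega
      rw [if_pos h1, if_neg e1, if_neg e2, if_neg e3, if_pos e4]
      congr 1
      omega
    · by_cases h2 : (a : ℕ) = j
      · have e1 : ((i : ℕ) = 0 ∨ (i : ℕ) = k) := by omega
        have e2 : ((a : ℕ) = 0 ∨ (a : ℕ) = k + 1) := by omega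
        rw [if_neg h1, if_pos h2, if_pos e1, if_pos e2]
      · rw [if_neg h1, if_neg h2]
        split_ifs <;> first | rfl | (exfalso; omega)
  exact DFunLike.congr_fun this f

lemma tau_swap (m k : ℕ) {i j : Fin (2 + m)} (hi : k < (i : ℕ))
    (hj : k < (j : ℕ)) (f : MvPolynomial (Fin (2 + m)) Rb) :
    tau m k (rename ⇑(Equiv.swap i j) f) = rename ⇑(Equiv.swap i j) (tau m k f) := by
  have : (tau m k).comp (rename ⇑(Equiv.swap i j)) =
      (rename ⇑(Equiv.swap i j)).comp (tau m k) := by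
    apply MvPolynomial.algHom_ext
    intro a
    simp only [AlgHom.comp_apply, rename_X, tau_X]
    have : ((Equiv.swap i j a : Fin (2 + m)) : ℕ) = 0 ∨ ((Equiv.swap i j a : Fin (2 + m)) : ℕ) = k
        ↔ (a : ℕ) = 0 ∨ (a : ℕ) = k := by
      simp only [Equiv.swap_apply_def, Fin.ext_iff]
      split_ifs <;> omega
    simp only [this]
    split_ifs <;> simp
  exact DFunLike.congr_fun this f

lemma phi_spTop (m : ℕ) : phi m (m + 1) (spTop (2 + m)) =
    spTop m * ∏ t ∈ Finset.range m, yv m t := by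
  unfold spTop
  rw [map_prod, ← Finset.prod_filter_mul_prod_filter_not _
    (fun p : Fin (2 + m) × Fin (2 + m) => (p.1 : ℕ) ≠ 0), Finset.prod_range]
  have hlt : ∀ a : Fin m, (a : ℕ) + 1 < 2 + m := fun a => by have := a.isLt; omega
  congr 1
  · symm
    refine Finset.prod_bij (fun p _ => (⟨p.1 + 1, hlt _⟩, ⟨p.2 + 1, hlt _⟩)) ?_ ?_ ?_ ?_
    · rintro ⟨a, b⟩ h
      simp only [Finset.mem_filter, Finset.mem_univ, true_and, Fin.lt_def] at h ⊢
      omega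
    · rintro ⟨a, b⟩ _ ⟨c, d⟩ _ h
      simp only [Prod.mk.injEq, Fin.ext_iff] at h ⊢
      omega
    · rintro ⟨a, b⟩ h
      simp only [Finset.mem_filter, Finset.mem_univ, true_and, Fin.lt_def] at h
      refine ⟨(⟨a - 1, by omega⟩, ⟨b - 1, by omega⟩), ?_, ?_⟩
      · simp only [Finset.mem_filter, Finset.mem_univ, true_and, Fin.lt_def]
        omega
      · simp only [Prod.mk.injEq, Fin.ext_iff]
        omega
    · rintro ⟨a, b⟩ _
      have h1 : ¬ ((a : ℕ) = m) := by omega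
      have h2 : ¬ ((b : ℕ) = m) := by omega
      simp [oplus, phi_X, algHom_C', yv, h1, h2]
  · symm
    refine Finset.prod_bij (fun t _ => (⟨0, by omega⟩, ⟨t + 1, hlt t⟩)) ?_ ?_ ?_ ?_
    · rintro a -
      have := a.isLt
      simp only [Finset.mem_filter, Finset.mem_univ, true_and, Fin.lt_def]
      omega
    · rintro a - c - h
      simp only [Prod.mk.injEq, Fin.ext_iff] at h ⊢
      omega
    · rintro ⟨a, b⟩ h
      simp only [Finset.mem_filter, Finset.mem_univ, true_and, Fin.lt_def] at h
      refine ⟨⟨b - 1, by omega⟩, Finset.mem_univ _, ?_⟩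
      simp only [Prod.mk.injEq, Fin.ext_iff]
      omega
    · rintro a -
      have h1 : ¬ ((a : ℕ) = m) := by omega
      simp [oplus, phi_X, algHom_C', h1]

lemma tau_spTop (m l : ℕ) (hl : 1 ≤ l) (hl2 : l ≤ m) : tau m l (spTop (2 + m)) = 0 := by
  unfold spTop
  rw [map_prod]
  apply Finset.prod_eq_zero (i := ((⟨0, by omega⟩ : Fin (2 + m)), (⟨l, by omega⟩ : Fin (2 + m))))
  · simp only [Finset.mem_filter, Finset.mem_univ, true_and, Fin.lt_def]
    omega
  · simp [oplus, tau_X]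

/-- The order embedding of the naturals skipping `0` and `k`. -/
def skp (k b : ℕ) : ℕ := if b + 1 < k then b + 1 else b + 2

/-- Values of the permutation with cycle `(0,k)` which is the reversal on the other letters. -/
def vf (m k a : ℕ) : ℕ :=
  if a = 0 then k else if a = k then 0 else
    skp k (m - 1 - (if a < k then a - 1 else a - 2))

/-- The transposition of `k` and `k + 1` on naturals. -/
def swn (k x : ℕ) : ℕ := if x = k then k + 1 else if x = k + 1 then k else x

lemma skp_swap (k b : ℕ) : swn k (skp (k + 1) b) = skp k b := by
  have e1 : b + 1 < k + 1 → skp (k + 1) b = b + 1 := fun h => if_pos h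
  have e2 : ¬ b + 1 < k + 1 → skp (k + 1) b = b + 2 := fun h => if_neg h
  generalize skp (k + 1) b = x at *
  unfold swn skp
  split_ifs <;> omega

lemma vf_gen (m k a : ℕ) (h0 : a ≠ 0) (h1 : a ≠ k) :
    vf m k a = skp k (m - 1 - (if a < k then a - 1 else a - 2)) := by
  rw [vf, if_neg h0, if_neg h1]

lemma vf_swap (m k a : ℕ) (hk : 1 ≤ k) : swn k (vf m (k + 1) (swn k a)) = vf m k a := by
  by_cases h1 : a = k
  · have e : vf m (k + 1) (k + 1) = 0 := by simp [vf]
    have e2 : vf m k k = 0 := by rw [vf, if_neg (by omega), if_pos rfl]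
    have e3 : swn k k = k + 1 := by simp [swn]
    rw [h1, e3, e, e2, swn, if_neg (by omega), if_neg (by omega)]
  · by_cases h0 : a = 0
    · have e : vf m (k + 1) 0 = k + 1 := by simp [vf]
      have e2 : vf m k 0 = k := by simp [vf]
      have e3 : swn k 0 = 0 := by rw [swn, if_neg (by omega), if_neg (by omega)]
      have e4 : swn k (k + 1) = k := by simp [swn]
      rw [h0, e3, e, e2, e4]
    · by_cases h2 : a = k + 1
      · have e4 : swn k (k + 1) = k := by simp [swn]
        rw [h2, e4, vf_gen m (k + 1) k (by omega) (by omega), skp_swap,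
          vf_gen m k (k + 1) (by omega) (by omega), if_pos (by omega), if_neg (by omega)]
        congr 2
      · have e4 : swn k a = a := by rw [swn, if_neg h1, if_neg h2]
        rw [e4, vf_gen m (k + 1) a h0 h2, skp_swap, vf_gen m k a h0 h1]
        congr 2
        by_cases h3 : a < k
        · rw [if_pos h3, if_pos (by omega)]
        · rw [if_neg h3, if_neg (by omega)]

lemma chain_exists (m : ℕ) (hm : m % 2 = 0)
    {G : Equiv.Perm (Fin (2 + m)) → MvPolynomial (Fin (2 + m)) Rb} (hG : IsSpFam (2 + m) G)
    (d : ℕ) : ∀ k, 1 ≤ k → k + d = m + 1 →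
    ∃ v : Equiv.Perm (Fin (2 + m)), IsFPF v ∧ (∀ a, ((v a : Fin (2 + m)) : ℕ) = vf m k a) ∧
      phi m k (G v) = spTop m * ∏ t ∈ Finset.range (k - 1), yv m t ∧
      ∀ l, 1 ≤ l → l < k → tau m l (G v) = 0 := by
  induction d with
  | zero =>
    intro k hk hkd
    obtain rfl : k = m + 1 := by omega
    refine ⟨revPerm (2 + m), revPerm_fpf (by omega), ?_, ?_, ?_⟩
    · intro a
      have := a.isLt
      rw [revPerm_val, vf, skp]
      split_ifs <;> omega
    · rw [hG.1]; exact phi_spTop m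
    · intro l h1 h2
      rw [hG.1]; exact tau_spTop m l h1 (by omega)
  | succ d ih =>
    intro k hk hkd
    obtain ⟨v, hv, hval, hphi, htau⟩ := ih (k + 1) (by omega) (by omega)
    let i : Fin (2 + m) := ⟨k, by omega⟩
    let j : Fin (2 + m) := ⟨k + 1, by omega⟩
    have hij : (j : ℕ) = (i : ℕ) + 1 := rfl
    have hne : i ≠ j := by intro h; rw [h] at hij; omega
    have vj : ((v j : Fin (2 + m)) : ℕ) = 0 := by rw [hval]; simp [vf, j]
    have vi0 : ((v i : Fin (2 + m)) : ℕ) ≠ 0 := by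
      intro h
      exact hne (v.injective (Fin.ext (h.trans vj.symm)))
    have hvji : v j ≠ i := by
      intro h; rw [h] at vj; simp only [i] at vj; omega
    have hvij : v i ≠ j := by
      intro h
      exact hvji (by rw [← h, hv.invol])
    have hlt : v j < v i := by rw [Fin.lt_def]; omega
    have hD := hG.2 v hv i j hij hvij hvji hlt
    refine ⟨_, hv.conj i j, ?_, ?_, ?_⟩
    · intro a
      have := a.isLt
      have key : ∀ b : Fin (2 + m), ((Equiv.swap i j b : Fin (2 + m)) : ℕ) =
          swn k b := by
        intro b
        simp only [swn]
        simp only [Equiv.swap_apply_def, Fin.ext_iff, i, j]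
        split_ifs <;> rfl
      rw [Equiv.Perm.mul_apply, Equiv.Perm.mul_apply, key, hval, key]
      exact vf_swap m k a hk
    · have h0 := htau k hk (by omega)
      have h1 := congrArg (phi m k) hD
      rw [map_sub, phi_swap m k hk rfl rfl, map_mul, map_mul, ← phi_tau m k (G v), h0,
        map_mul, hphi] at h1
      have hki : phi m k (X i) = 0 := by simp [phi_X, i]
      have hkj : phi m k (X j) = yv m (k - 1) := by
        rw [phi_X, if_neg (by simp only [j]; omega), if_neg (by simp only [j]; omega)]
        congr 1
      have hkj' : phi m (k + 1) (X j) = 0 := by simp [phi_X, j]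
      have hy : yv m (k - 1) ≠ 0 := by
        rw [yv, dif_pos (by omega)]; exact X_ne_zero _
      simp only [map_sub, map_add, map_mul, map_one, hki, hkj, hkj', map_zero] at h1
      apply mul_left_cancel₀ hy
      have hr : ∏ t ∈ Finset.range (k + 1 - 1), yv m t =
          (∏ t ∈ Finset.range (k - 1), yv m t) * yv m (k - 1) := by
        rw [← Finset.prod_range_succ]; congr 2; omega
      rw [hr] at h1
      linear_combination -h1
    · intro l h1 h2
      have h0 := htau l h1 (by omega)
      have h3 := congrArg (tau m l) hD
      rw [map_sub, tau_swap m l (by exact h2) (by simp only [j]; omega), map_mul, map_mul, h0,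
        map_sub, tau_X, tau_X, if_neg (by simp only [i]; omega),
        if_neg (by simp only [j]; omega)] at h3
      simp only [mul_zero, map_zero, sub_zero] at h3
      exact (mul_eq_zero.mp h3).resolve_left (X_sub_ne hne)

/-! ### Products of permutations and restriction of families -/

lemma extPerm_val_lt {m n : ℕ} (z : Equiv.Perm (Fin m)) (w : Equiv.Perm (Fin n))
    (a : Fin (m + n)) (h : (a : ℕ) < m) :
    ((extPerm z w a : Fin (m + n)) : ℕ) = (z ⟨a, h⟩ : Fin m) := by
  obtain ⟨b, rfl⟩ : ∃ b : Fin m, a = Fin.castAdd n b := ⟨⟨a, h⟩, rfl⟩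
  have : (⟨(Fin.castAdd n b : Fin (m + n)), h⟩ : Fin m) = b := rfl
  rw [this]
  simp [extPerm]

lemma extPerm_val_ge {m n : ℕ} (z : Equiv.Perm (Fin m)) (w : Equiv.Perm (Fin n))
    (a : Fin (m + n)) (h : m ≤ (a : ℕ)) (h2 : (a : ℕ) - m < n) :
    ((extPerm z w a : Fin (m + n)) : ℕ) = m + (w ⟨a - m, h2⟩ : Fin n) := by
  obtain ⟨b, rfl⟩ : ∃ b : Fin n, a = Fin.natAdd m b :=
    ⟨⟨a - m, h2⟩, by apply Fin.ext; simp only [Fin.val_natAdd]; omega⟩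
  have : (⟨(Fin.natAdd m b : Fin (m + n)) - m, h2⟩ : Fin n) = b := by
    apply Fin.ext; simp only [Fin.val_natAdd]; omega
  rw [this]
  simp [extPerm]

lemma extPerm_fpf {m n : ℕ} {z : Equiv.Perm (Fin m)} {w : Equiv.Perm (Fin n)}
    (hz : IsFPF z) (hw : IsFPF w) : IsFPF (extPerm z w) := by
  refine ⟨?_, ?_⟩
  · ext a
    refine Fin.addCases (fun b => ?_) (fun b => ?_) a
    · simp [extPerm, Equiv.Perm.mul_apply, hz.invol]
    · simp [extPerm, Equiv.Perm.mul_apply, hw.invol]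
  · intro a
    refine Fin.addCases (fun b => ?_) (fun b => ?_) a
    · simpa [extPerm] using hz.2 b
    · simpa [extPerm] using hw.2 b

lemma theta_val {n : ℕ} (hn : n % 2 = 0) (a : Fin n) :
    ((theta n hn a : Fin n) : ℕ) = if (a : ℕ) % 2 = 0 then (a : ℕ) + 1 else (a : ℕ) - 1 := rfl

lemma theta_fpf {n : ℕ} (hn : n % 2 = 0) : IsFPF (theta n hn) := by
  refine ⟨?_, ?_⟩
  · ext a
    simp only [Equiv.Perm.mul_apply, theta_val, Equiv.Perm.coe_one, id]
    split_ifs <;> omega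
  · intro a h
    have := congrArg Fin.val h
    rw [theta_val] at this
    split_ifs at this <;> omega

/-- The family obtained by killing the first two variables. -/
def resFam (m : ℕ) (G : Equiv.Perm (Fin (2 + m)) → MvPolynomial (Fin (2 + m)) Rb)
    (y : Equiv.Perm (Fin m)) : MvPolynomial (Fin m) Rb :=
  phi m 1 (G (extPerm (theta 2 rfl) y))

lemma phi_one_X (m : ℕ) (i : Fin m) : phi m 1 (X (Fin.natAdd 2 i)) = X i := by
  rw [phi_X, if_neg (by simp only [Fin.val_natAdd]; omega),
    if_neg (by simp only [Fin.val_natAdd]; omega), yv,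
    dif_pos (by have := i.isLt; simp)]
  congr 1
  apply Fin.ext
  simp

lemma phi_one_swap (m : ℕ) (i j : Fin m) (f : MvPolynomial (Fin (2 + m)) Rb) :
    phi m 1 (rename ⇑(Equiv.swap (Fin.natAdd 2 i) (Fin.natAdd 2 j)) f) =
      rename ⇑(Equiv.swap i j) (phi m 1 f) := by
  have : (phi m 1).comp (rename ⇑(Equiv.swap (Fin.natAdd 2 i) (Fin.natAdd 2 j))) =
      (rename ⇑(Equiv.swap i j)).comp (phi m 1) := by
    apply MvPolynomial.algHom_ext
    intro a
    simp only [AlgHom.comp_apply, rename_X]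
    refine Fin.addCases (fun b => ?_) (fun b => ?_) a
    · have hb := b.isLt
      rw [Equiv.swap_apply_of_ne_of_ne, phi_X, if_pos (by simp; omega), map_zero]
      · intro h; have := congrArg Fin.val h; simp at this; omega
      · intro h; have := congrArg Fin.val h; simp at this; omega
    · rw [phi_one_X, rename_X,
        (Fin.natAdd_injective m 2).swap_apply i j b, phi_one_X]
  exact DFunLike.congr_fun this f

lemma resFam_isSpFam {m : ℕ} (hm : m % 2 = 0)
    {G : Equiv.Perm (Fin (2 + m)) → MvPolynomial (Fin (2 + m)) Rb} (hG : IsSpFam (2 + m) G) :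
    IsSpFam m (resFam m G) := by
  refine ⟨?_, ?_⟩
  · obtain ⟨v, hv, hval, hphi, -⟩ := chain_exists m hm hG m 1 le_rfl (by omega)
    have : extPerm (theta 2 rfl) (revPerm m) = v := by
      ext a
      have ha := a.isLt
      rw [hval]
      by_cases h : (a : ℕ) < 2
      · rw [extPerm_val_lt _ _ a h, theta_val, vf]
        simp only
        split_ifs <;> omega
      · rw [extPerm_val_ge _ _ a (by omega) (by omega), revPerm_val, vf_gen _ _ _ (by omega)
          (by omega), if_neg (by omega), skp, if_neg (by omega)]
        simp only
        omega
    rw [resFam, this, hphi]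
    simp
  · intro y hy i j hij h1 h2 h3
    have key : ∀ b : Fin m, extPerm (theta 2 rfl) y (Fin.natAdd 2 b) = Fin.natAdd 2 (y b) := by
      intro b; simp [extPerm]
    have inj := Fin.natAdd_injective m 2
    have hD := hG.2 (extPerm (theta 2 rfl) y) (extPerm_fpf (theta_fpf rfl) hy)
      (Fin.natAdd 2 i) (Fin.natAdd 2 j) (by simp; omega)
      (by rw [key]; exact fun h => h1 (inj h)) (by rw [key]; exact fun h => h2 (inj h))
      (by rw [key, key, Fin.lt_def]; simpa using h3)
    have hc : Equiv.swap (Fin.natAdd 2 i) (Fin.natAdd 2 j) * extPerm (theta 2 rfl) y *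
        Equiv.swap (Fin.natAdd 2 i) (Fin.natAdd 2 j) =
        extPerm (theta 2 rfl) (Equiv.swap i j * y * Equiv.swap i j) := by
      apply Equiv.ext
      intro a
      have hs : ∀ b : Fin 2, Equiv.swap (Fin.natAdd 2 i) (Fin.natAdd 2 j) (Fin.castAdd m b)
          = Fin.castAdd m b := by
        intro b
        have hb := b.isLt
        apply Equiv.swap_apply_of_ne_of_ne
        · intro h; have := congrArg Fin.val h; simp at this; omega
        · intro h; have := congrArg Fin.val h; simp at this; omega
      refine Fin.addCases (fun b => ?_) (fun b => ?_) a
      · have k2 : ∀ (w : Equiv.Perm (Fin m)) (b : Fin 2), extPerm (theta 2 rfl) w (Fin.castAdd m b)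
            = Fin.castAdd m (theta 2 rfl b) := by
          intro w b; simp [extPerm]
        simp only [Equiv.Perm.mul_apply, hs, k2]
      · have k2 : ∀ (w : Equiv.Perm (Fin m)) (b : Fin m), extPerm (theta 2 rfl) w (Fin.natAdd 2 b)
            = Fin.natAdd 2 (w b) := by
          intro w b; simp [extPerm]
        simp only [Equiv.Perm.mul_apply, k2, inj.swap_apply]
    rw [hc] at hD
    have := congrArg (phi m 1) hD
    unfold IsDivDiffB resFam
    rw [map_sub, phi_one_swap] at this
    simpa only [map_mul, map_sub, map_add, map_one, phi_one_X, algHom_C'] using this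

/-- Kill the variables `k`, `k + 1`, renumber, and truncate to `n` variables. -/
def ek (n M k : ℕ) : MvPolynomial (Fin M) Rb →ₐ[Rb] MvPolynomial (Fin n) Rb :=
  aeval (fun a : Fin M => if (a : ℕ) < k then yv n a
    else if (a : ℕ) < k + 2 then 0 else yv n ((a : ℕ) - 2))

lemma ek_X (n M k : ℕ) (a : Fin M) : ek n M k (X a) = if (a : ℕ) < k then yv n a
    else if (a : ℕ) < k + 2 then 0 else yv n ((a : ℕ) - 2) := by
  simp [ek]

lemma ek_step (n M k : ℕ) {i j l : Fin M} (hi : (i : ℕ) = k) (hj : (j : ℕ) = k + 1)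
    (hl : (l : ℕ) = k + 2) (f : MvPolynomial (Fin M) Rb)
    (h1 : rename ⇑(Equiv.swap i j) f = f) (h2 : rename ⇑(Equiv.swap j l) f = f) :
    ek n M k f = ek n M (k + 1) f := by
  have : ((ek n M k).comp (rename ⇑(Equiv.swap j l))).comp (rename ⇑(Equiv.swap i j)) =
      ek n M (k + 1) := by
    apply MvPolynomial.algHom_ext
    intro a
    have hs : ((Equiv.swap j l (Equiv.swap i j a) : Fin M) : ℕ) =
        if (a : ℕ) = k then k + 2 else if (a : ℕ) = k + 1 then k else
          if (a : ℕ) = k + 2 then k + 1 else a := by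
      simp only [Equiv.swap_apply_def, Fin.ext_iff]
      split_ifs <;> omega
    simp only [AlgHom.comp_apply, rename_X, ek_X, hs]
    by_cases c1 : (a : ℕ) = k
    · simp [c1]
    by_cases c2 : (a : ℕ) = k + 1
    · simp [c2]
    by_cases c3 : (a : ℕ) = k + 2
    · simp [c3]
    rw [if_neg c1, if_neg c2, if_neg c3]
    split_ifs <;> first | rfl | (exfalso; omega)
  have h3 := DFunLike.congr_fun this f
  rw [AlgHom.comp_apply, AlgHom.comp_apply, h1, h2] at h3
  exact h3

lemma truncVars_eq_ek (n M : ℕ) (f : MvPolynomial (Fin M) Rb) :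
    truncVars n M f = ek n M n f := by
  have : (aeval (fun i : Fin M => if h : (i : ℕ) < n then (X ⟨(i : ℕ), h⟩ :
      MvPolynomial (Fin n) Rb) else 0)) = ek n M n := by
    apply MvPolynomial.algHom_ext
    intro a
    rw [ek_X, aeval_X]
    simp only [yv]
    split_ifs <;> first | rfl | (exfalso; omega)
  exact DFunLike.congr_fun this f

lemma truncVars_phi (n m : ℕ) (f : MvPolynomial (Fin (2 + m)) Rb) :
    truncVars n m (phi m 1 f) = ek n (2 + m) 0 f := by
  have : (aeval (fun i : Fin m => if h : (i : ℕ) < n then (X ⟨(i : ℕ), h⟩ :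
      MvPolynomial (Fin n) Rb) else 0)).comp (phi m 1) = ek n (2 + m) 0 := by
    apply MvPolynomial.algHom_ext
    intro a
    refine Fin.addCases (fun b => ?_) (fun b => ?_) a
    · have hb := b.isLt
      rw [AlgHom.comp_apply, ek_X, phi_X, if_pos (by simp; omega), map_zero,
        if_neg (by simp), if_pos (by simp only [Fin.val_castAdd]; omega)]
    · rw [AlgHom.comp_apply, ek_X, phi_one_X, aeval_X, if_neg (by simp),
        if_neg (by simp only [Fin.val_natAdd]; omega)]
      simp [yv]
  exact DFunLike.congr_fun this f

lemma res_step {M' m : ℕ} (n : ℕ) (hM : M' = 2 + m) (hm : m % 2 = 0) (hnm : n ≤ m)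
    {G' : Equiv.Perm (Fin M') → MvPolynomial (Fin M') Rb} (hG' : IsSpFam M' G')
    (Y : Equiv.Perm (Fin M')) (y : Equiv.Perm (Fin m))
    (hY1 : ∀ a : Fin M', (a : ℕ) < 2 → ((Y a : Fin M') : ℕ) = 1 - a)
    (hY2 : ∀ a : Fin M', 2 ≤ (a : ℕ) → ∀ h : (a : ℕ) - 2 < m,
      ((Y a : Fin M') : ℕ) = 2 + ((y ⟨(a : ℕ) - 2, h⟩ : Fin m) : ℕ))
    (hsym : ∀ i j : Fin M', (j : ℕ) = (i : ℕ) + 1 → (j : ℕ) ≤ n + 1 →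
      rename ⇑(Equiv.swap i j) (G' Y) = G' Y) :
    ∃ G, IsSpFam m G ∧ truncVars n M' (G' Y) = truncVars n m (G y) := by
  subst hM
  refine ⟨resFam m G', resFam_isSpFam hm hG', ?_⟩
  have hYe : extPerm (theta 2 rfl) y = Y := by
    ext a
    have ha := a.isLt
    by_cases h : (a : ℕ) < 2
    · rw [extPerm_val_lt _ _ a h, theta_val, hY1 a h]
      simp only
      split_ifs <;> omega
    · rw [extPerm_val_ge _ _ a (by omega) (by omega), hY2 a (by omega) (by omega)]
  rw [resFam, hYe, truncVars_phi, truncVars_eq_ek]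
  have : ∀ k, k ≤ n → ek n (2 + m) k (G' Y) = ek n (2 + m) 0 (G' Y) := by
    intro k
    induction k with
    | zero => intro _; rfl
    | succ k ih =>
      intro hk
      rw [← ih (by omega)]
      symm
      exact ek_step n (2 + m) k (i := ⟨k, by omega⟩) (j := ⟨k + 1, by omega⟩)
        (l := ⟨k + 2, by omega⟩) rfl rfl rfl _
        (hsym _ _ rfl (by simp only; omega)) (hsym _ _ rfl (by simp only; omega))
  exact this n le_rfl

lemma ext_symm {n N : ℕ} {z : Equiv.Perm (Fin n)} (hz : IsFPF z) (hN : (2 * N) % 2 = 0)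
    {G : Equiv.Perm (Fin (2 * N + n)) → MvPolynomial (Fin (2 * N + n)) Rb}
    (hG : IsSpFam (2 * N + n) G) (i j : Fin (2 * N + n)) (hij : (j : ℕ) = (i : ℕ) + 1)
    (hj : (j : ℕ) ≤ 2 * N) :
    rename ⇑(Equiv.swap i j) (G (extPerm (theta (2 * N) hN) z)) =
      G (extPerm (theta (2 * N) hN) z) := by
  have hf : IsFPF (extPerm (theta (2 * N) hN) z) := extPerm_fpf (theta_fpf hN) hz
  have hne : i ≠ j := by intro h; rw [h] at hij; omega
  have hyi := extPerm_val_lt (theta (2 * N) hN) z i (by omega)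
  rw [theta_val] at hyi
  simp only at hyi
  by_cases hp : (i : ℕ) % 2 = 0
  · rw [if_pos hp] at hyi
    exact fam_symm hG _ _ hf rfl i j hij (Fin.ext (by omega))
  · rw [if_neg hp] at hyi
    refine divdiff_symm hne (ascent_step hf hij ?_ hG)
    rw [Fin.lt_def, hyi]
    by_cases hjl : (j : ℕ) < 2 * N
    · rw [extPerm_val_lt _ _ j hjl, theta_val]
      simp only
      split_ifs <;> omega
    · have := j.isLt
      rw [extPerm_val_ge _ _ j (by omega) (by omega)]
      omega

lemma reduce_fam (n : ℕ) (hev : n % 2 = 0) (z : Equiv.Perm (Fin n)) (hz : IsFPF z) (k : ℕ) :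
    ∀ N, N = n + k → ∀ G : Equiv.Perm (Fin (2 * N + n)) → MvPolynomial (Fin (2 * N + n)) Rb,
      IsSpFam (2 * N + n) G → ∃ G0 : Equiv.Perm (Fin (2 * n + n)) →
        MvPolynomial (Fin (2 * n + n)) Rb, IsSpFam (2 * n + n) G0 ∧
        truncVars n (2 * N + n) (G (extPerm (theta (2 * N) (by omega)) z)) =
          truncVars n (2 * n + n) (G0 (extPerm (theta (2 * n) (by omega)) z)) := by
  induction k with
  | zero =>
    intro N hN G hG
    obtain rfl : N = n := by omega
    exact ⟨G, hG, rfl⟩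
  | succ k ih =>
    intro N hN G hG
    obtain ⟨G1, hG1, h1⟩ := res_step (m := 2 * (n + k) + n) n (by omega) (by omega) (by omega) hG
      (extPerm (theta (2 * N) (by omega)) z) (extPerm (theta (2 * (n + k)) (by omega)) z)
      (by
        intro a ha
        rw [extPerm_val_lt _ _ a (by omega), theta_val]
        simp only
        split_ifs <;> omega)
      (by
        intro a ha h
        by_cases hl : (a : ℕ) < 2 * N
        · rw [extPerm_val_lt _ _ a hl, extPerm_val_lt _ _ _ (by simp only; omega), theta_val,
            theta_val]
          simp only
          split_ifs <;> omega
        · have := a.isLt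
          rw [extPerm_val_ge _ _ a (by omega) (by omega),
            extPerm_val_ge _ _ _ (by simp only; omega) (by simp only; omega)]
          have e : ∀ (p q : ℕ) (hp : p < n) (hq : q < n), p = q →
              ((z ⟨p, hp⟩ : Fin n) : ℕ) = (z ⟨q, hq⟩ : Fin n) := by
            intro p q hp hq h; subst h; rfl
          rw [e _ _ _ (show (a : ℕ) - 2 * N < n by omega)
            (show (a : ℕ) - 2 - 2 * (n + k) = (a : ℕ) - 2 * N by omega)]
          omega)
      (fun i j hij hj => ext_symm hz _ hG i j hij (by omega))
    obtain ⟨G0, hG0, h0⟩ := ih (n + k) rfl G1 hG1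
    exact ⟨G0, hG0, h1.trans h0⟩

lemma truncVars_symm (n M : ℕ) (hM : n ≤ M) (f : MvPolynomial (Fin M) Rb)
    (hsym : ∀ i j : Fin M, (j : ℕ) = (i : ℕ) + 1 → (j : ℕ) < n →
      rename ⇑(Equiv.swap i j) f = f) (i j : Fin n) (hij : (j : ℕ) = (i : ℕ) + 1) :
    rename ⇑(Equiv.swap i j) (truncVars n M f) = truncVars n M f := by
  have hs := hsym (Fin.castLE hM i) (Fin.castLE hM j) (by simpa using hij) (by simp)
  conv_rhs => rw [← hs]
  have : (rename ⇑(Equiv.swap i j)).comp (aeval (fun i : Fin M => if h : (i : ℕ) < n then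
      (X ⟨(i : ℕ), h⟩ : MvPolynomial (Fin n) Rb) else 0)) =
      (aeval (fun i : Fin M => if h : (i : ℕ) < n then
      (X ⟨(i : ℕ), h⟩ : MvPolynomial (Fin n) Rb) else 0)).comp
      (rename ⇑(Equiv.swap (Fin.castLE hM i) (Fin.castLE hM j))) := by
    apply MvPolynomial.algHom_ext
    intro a
    simp only [AlgHom.comp_apply, aeval_X, rename_X]
    by_cases ha : (a : ℕ) < n
    · have e : a = Fin.castLE hM ⟨a, ha⟩ := rfl
      rw [dif_pos ha, rename_X]
      conv_rhs => rw [e, (Fin.castLE_injective hM).swap_apply]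
      simp
    · rw [dif_neg ha, Equiv.swap_apply_of_ne_of_ne, dif_neg ha, map_zero]
      · intro h; apply ha; rw [h]; simp
      · intro h; apply ha; rw [h]; simp
  exact DFunLike.congr_fun this f

lemma symm_of_adjacent (n : ℕ) (p : MvPolynomial (Fin n) Rb)
    (h : ∀ i j : Fin n, (j : ℕ) = (i : ℕ) + 1 → rename ⇑(Equiv.swap i j) p = p)
    (σ : Equiv.Perm (Fin n)) : rename ⇑σ p = p := by
  obtain _ | n := n
  · have : σ = 1 := Subsingleton.elim _ _
    rw [this]; simp
  have hσ : σ ∈ Submonoid.closure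
      (Set.range fun i : Fin n => Equiv.swap i.castSucc i.succ) := by
    rw [Equiv.Perm.mclosure_swap_castSucc_succ]; trivial
  induction hσ using Submonoid.closure_induction with
  | mem x hx =>
    obtain ⟨i, rfl⟩ := hx
    exact h _ _ (by simp)
  | one => simp
  | mul x y _ _ hx hy => rw [← rename_rename_perm, hy, hx]

theorem statement8 (n : ℕ) (hpos : 0 < n) (hev : n % 2 = 0)
    (z : Equiv.Perm (Fin n)) (hz : IsFPF z)
    (N N' : ℕ) (hN : n ≤ N) (hN' : n ≤ N')
    (G : Equiv.Perm (Fin (2 * N + n)) → MvPolynomial (Fin (2 * N + n)) Rb)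
    (hG : IsSpFam (2 * N + n) G)
    (G' : Equiv.Perm (Fin (2 * N' + n)) → MvPolynomial (Fin (2 * N' + n)) Rb)
    (hG' : IsSpFam (2 * N' + n) G') :
    truncVars n (2 * N + n) (G (extPerm (theta (2 * N) (by omega)) z)) =
      truncVars n (2 * N' + n) (G' (extPerm (theta (2 * N') (by omega)) z)) ∧
    ∀ σ : Equiv.Perm (Fin n),
      rename (⇑σ) (truncVars n (2 * N + n) (G (extPerm (theta (2 * N) (by omega)) z))) =
        truncVars n (2 * N + n) (G (extPerm (theta (2 * N) (by omega)) z)) := by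
  refine ⟨?_, ?_⟩
  · obtain ⟨G0, hG0, h0⟩ := reduce_fam n hev z hz (N - n) N (by omega) G hG
    obtain ⟨G1, hG1, h1⟩ := reduce_fam n hev z hz (N' - n) N' (by omega) G' hG'
    rw [h0, h1, fam_unique hG0 hG1 _ _ (extPerm_fpf (theta_fpf (by omega)) hz) rfl]
  · apply symm_of_adjacent
    apply truncVars_symm _ _ (by omega)
    intro i j hij hj
    exact ext_symm hz _ hG i j hij (by omega)

end
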